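/- arXiv:1609.08303 — 2 statements merged into one kernel-verified Lean document; each statement's English description precedes it below -/
import Mathlib

section
/- Let p, q > 1 be coprime integers with p even and k + l even. Let ρ be an integer with 0 ≤ ρ ≤ p/2 and r_ρ ≥ p/2. Then δ + ρ ∉ S(p,q). -/
/-- The numerical semigroup generated by `p` and `q`:
all integers of the form `t*p + u*q` with `t, u ≥ 0`. -/
def Spq (p q : ℤ) : Set ℤ := {n : ℤ | ∃ t u : ℤ, 0 ≤ t ∧ 0 ≤ u ∧ n = t * p + u * q}

/-- The set of integers `s ≥ 0` such that `δ, δ+1, …, δ+s` either all belong to `S(p,q)`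
or none of them does, where `δ = (p-1)*(q-1)/2`.  `K(p,q)` is the greatest element
of this set. -/
def KSet (p q : ℤ) : Set ℤ :=
  {s : ℤ | 0 ≤ s ∧ ∀ ρ : ℤ, 0 ≤ ρ → ρ ≤ s →
    ((p - 1) * (q - 1) / 2 + ρ ∈ Spq p q ↔ (p - 1) * (q - 1) / 2 ∈ Spq p q)}

/-!
If `q * s ≡ 1` modulo `p`, the Apéry element of `S(p,q)` in the residue class of `n` modulo `p` is
`(n * s % p) * q`, so `n` lies in `S(p,q)` exactly when it is at least that large. For `n = δ + ρ`
the congruence `q * s ≡ 1` modulo `2 * p`, which is where the parity of `k + l` enters, allows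
halving `2 * δ * s ≡ s - 1` and identifies `n * s % p` with `r_ρ`. When `r_ρ ≥ p / 2` the Apéry
element is at least `p * q / 2`, whereas `δ + ρ < p * q / 2`.
-/

section

variable {p q s : ℤ}

theorem mem_Spq_iff_emod_mul_le {n : ℤ} (hp : 0 < p) (hq : 0 ≤ q) (hqs : q * s ≡ 1 [ZMOD p]) :
    n ∈ Spq p q ↔ n * s % p * q ≤ n := by
  constructor
  · rintro ⟨t, u, ht, hu, rfl⟩
    have hmod : (t * p + u * q) * s ≡ u [ZMOD p] :=
      calc (t * p + u * q) * s = u * (q * s) + p * (t * s) := by ring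
        _ ≡ u * (q * s) [ZMOD p] := Int.modEq_add_fac_self
        _ ≡ u * 1 [ZMOD p] := hqs.mul_left u
        _ = u := mul_one u
    have hemod : u % p ≤ u := by
      rw [Int.emod_def]
      exact sub_le_self u (mul_nonneg hp.le (Int.ediv_nonneg hu hp.le))
    calc (t * p + u * q) * s % p * q = u % p * q := by rw [hmod.eq]
      _ ≤ u * q := mul_le_mul_of_nonneg_right hemod hq
      _ ≤ t * p + u * q := le_add_of_nonneg_left (mul_nonneg ht hp.le)
  · intro hle
    have hmod : n * s % p * q ≡ n [ZMOD p] :=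
      calc n * s % p * q ≡ n * s * q [ZMOD p] := (Int.mod_modEq _ _).mul_right q
        _ = n * (q * s) := by ring
        _ ≡ n * 1 [ZMOD p] := hqs.mul_left n
        _ = n := mul_one n
    obtain ⟨t, ht⟩ := hmod.dvd
    have ht_nonneg : 0 ≤ t := nonneg_of_mul_nonneg_right (ht ▸ sub_nonneg.mpr hle) hp
    exact ⟨t, n * s % p, ht_nonneg, Int.emod_nonneg _ hp.ne', by linear_combination ht⟩

theorem odd_and_odd_of_mul_modEq_one_two_mul (hqs : q * s ≡ 1 [ZMOD 2 * p]) : Odd q ∧ Odd s :=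
  Int.odd_mul.mp (Int.odd_iff.mpr hqs.of_mul_right)

theorem delta_add_mul_modEq (ρ : ℤ) (hqs : q * s ≡ 1 [ZMOD 2 * p]) :
    ((p - 1) * (q - 1) / 2 + ρ) * s ≡ (s - 1) / 2 + ρ * s [ZMOD p] := by
  obtain ⟨⟨h, rfl⟩, ⟨b, rfl⟩⟩ := odd_and_odd_of_mul_modEq_one_two_mul hqs
  have hδ : (p - 1) * (2 * h + 1 - 1) / 2 = (p - 1) * h := by
    rw [add_sub_cancel_right, mul_left_comm, Int.mul_ediv_cancel_left _ two_ne_zero]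
  have hb : (2 * b + 1 - 1) / 2 = b := by lia
  have hdouble : 2 * ((p - 1) * h * (2 * b + 1)) ≡ 2 * b [ZMOD 2 * p] :=
    calc 2 * ((p - 1) * h * (2 * b + 1))
        = (p - 1) * ((2 * h + 1) * (2 * b + 1) - (2 * b + 1)) := by ring
      _ ≡ (p - 1) * (1 - (2 * b + 1)) [ZMOD 2 * p] := (hqs.sub_right _).mul_left _
      _ = 2 * b + 2 * p * -b := by ring
      _ ≡ 2 * b [ZMOD 2 * p] := Int.modEq_add_fac_self
  rw [hδ, hb, add_mul]
  exact (hdouble.mul_left_cancel' two_ne_zero).add_right _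

theorem mul_modEq_one_of_even_add {k r l : ℤ} (hp : Even p) (hq : q = k * p + r)
    (hrs : r * s = 1 + l * p) (hkl : Even (k + l)) : q * s ≡ 1 [ZMOD 2 * p] := by
  have hs : Odd s := by
    have hodd : Odd (r * s) := hrs ▸ odd_one.add_even (hp.mul_left l)
    exact (Int.odd_mul.mp hodd).2
  obtain ⟨b, hb⟩ := hs
  obtain ⟨c, hc⟩ := hkl
  have hqs : q * s = 1 + 2 * p * (b * k + c) := by
    linear_combination s * hq + hrs + k * p * hb + p * hc
  exact hqs ▸ Int.modEq_add_fac_self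

end

theorem stmt15_general {p q s ρ : ℤ} (hp : 0 < p) (hq : 0 ≤ q) (hqs : q * s ≡ 1 [ZMOD 2 * p])
    (hρ : 2 * ρ + 1 < p + q) (hr : p ≤ 2 * (((s - 1) / 2 + ρ * s) % p)) :
    (p - 1) * (q - 1) / 2 + ρ ∉ Spq p q := by
  rw [mem_Spq_iff_emod_mul_le hp hq hqs.of_mul_left, (delta_add_mul_modEq ρ hqs).eq, not_le]
  have hδ : 2 * ((p - 1) * (q - 1) / 2) ≤ (p - 1) * (q - 1) := Int.mul_ediv_self_le two_ne_zero
  have hapery : p * q ≤ 2 * (((s - 1) / 2 + ρ * s) % p) * q := mul_le_mul_of_nonneg_right hr hq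
  linarith

theorem stmt15 (p q k r rb l ρ : ℤ) (hp : 1 < p) (hq : 1 < q)
    (hpq : Int.gcd p q = 1) (hpeven : Even p)
    (hqkr : q = k * p + r) (hr0 : 0 < r) (hrp : r < p)
    (hrb0 : 0 < rb) (hrbp : rb < p) (hrrb : r * rb = 1 + l * p)
    (hkl : Even (k + l))
    (hρ0 : 0 ≤ ρ) (hρ1 : ρ ≤ p / 2)
    (hrρ : p / 2 ≤ ((rb - 1) / 2 + ρ * rb) % p) :
    (p - 1) * (q - 1) / 2 + ρ ∉ Spq p q := by
  have hqs : q * rb ≡ 1 [ZMOD 2 * p] := mul_modEq_one_of_even_add hpeven hqkr hrrb hkl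
  have hp2 : 2 * (p / 2) = p := Int.two_mul_ediv_two_of_even hpeven
  exact stmt15_general (by lia) (by lia) hqs (by lia) (by lia)
end

section
/- Let p, q > 1 be coprime integers with p even and k + l odd. Let ρ be an integer with 0 ≤ ρ ≤ p/2 and r′_ρ ≤ p/2 − 1. Then δ + ρ ∈ S(p,q); indeed there exists an integer t ≥ 0 with δ + ρ = t·p + r′_ρ·q. -/
theorem even_sub_one_mul_sub_one_of_isCoprime {p q : ℤ} (h : IsCoprime p q) :
    Even ((p - 1) * (q - 1)) := by
  rcases Int.even_or_odd p with hp | hp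
  · have hq : Odd q := by
      by_contra hq
      have h2 : IsUnit (2 : ℤ) := h.isUnit_of_dvd' hp.two_dvd (Int.not_odd_iff_even.mp hq).two_dvd
      exact absurd h2 (by decide)
    exact (hq.sub_odd odd_one).mul_left _
  · exact (hp.sub_odd odd_one).mul_right _

theorem odd_right_of_mul_eq_one_add_mul {p r rb l : ℤ} (hp : Even p) (h : r * rb = 1 + l * p) :
    Odd rb :=
  Int.Odd.of_mul_right (h ▸ odd_one.add_even (hp.mul_left l))

theorem odd_add_mul_of_odd {k l b : ℤ} (hkl : Odd (k + l)) (hb : Odd b) : Odd (l + k * b) := by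
  rw [show l + k * b = (k + l) + k * (b - 1) by ring]
  exact hkl.add_even ((hb.sub_odd odd_one).mul_left k)

theorem exists_nonneg_eq_mul_add_of_modEq_of_lt {p n m : ℤ} (hp : 0 < p) (h : n ≡ m [ZMOD p])
    (hlt : m < n + p) : ∃ t : ℤ, 0 ≤ t ∧ n = t * p + m := by
  obtain ⟨t, ht⟩ := h.symm.dvd
  have hpt : p * (-1) < p * t := by linarith
  have ht0 : -1 < t := lt_of_mul_lt_mul_left hpt hp.le
  exact ⟨t, by omega, by linear_combination ht⟩

section Inverse

variable {p q rb L : ℤ}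

theorem even_sub_one_mul_sub_one_of_mul_eq_one_add_mul (hqrb : q * rb = 1 + L * p) :
    Even ((p - 1) * (q - 1)) :=
  even_sub_one_mul_sub_one_of_isCoprime ⟨-L, rb, by linear_combination hqrb⟩

theorem sub_one_mul_sub_one_ediv_two_modEq (hqrb : q * rb = 1 + L * p) (hL : Odd L)
    (hprb : Odd (p + rb)) :
    (p - 1) * (q - 1) / 2 ≡ (p + rb - 1) / 2 * q [ZMOD p] := by
  have hδ : 2 * ((p - 1) * (q - 1) / 2) = (p - 1) * (q - 1) :=
    Int.two_mul_ediv_two_of_even (even_sub_one_mul_sub_one_of_mul_eq_one_add_mul hqrb)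
  have hu : 2 * ((p + rb - 1) / 2) = p + rb - 1 :=
    Int.two_mul_ediv_two_of_even (hprb.sub_odd odd_one)
  obtain ⟨c, hc⟩ := hL
  refine Int.modEq_iff_dvd.mpr ⟨c + 1, mul_left_cancel₀ (two_ne_zero' ℤ) ?_⟩
  linear_combination q * hu - hδ + hqrb + p * hc

theorem sub_one_mul_sub_one_ediv_two_add_modEq (hqrb : q * rb = 1 + L * p) (hL : Odd L)
    (hprb : Odd (p + rb)) (ρ : ℤ) :
    (p - 1) * (q - 1) / 2 + ρ ≡ ((p + rb - 1) / 2 + ρ * rb) % p * q [ZMOD p] := by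
  have hρ : ρ ≡ ρ * rb * q [ZMOD p] :=
    Int.modEq_iff_dvd.mpr ⟨ρ * L, by linear_combination ρ * hqrb⟩
  calc (p - 1) * (q - 1) / 2 + ρ
      ≡ (p + rb - 1) / 2 * q + ρ * rb * q [ZMOD p] :=
        (sub_one_mul_sub_one_ediv_two_modEq hqrb hL hprb).add hρ
    _ = ((p + rb - 1) / 2 + ρ * rb) * q := (add_mul _ _ _).symm
    _ ≡ ((p + rb - 1) / 2 + ρ * rb) % p * q [ZMOD p] := (Int.mod_modEq _ p).symm.mul_right q

end Inverse

theorem mul_lt_sub_one_mul_sub_one_ediv_two_add {p q v ρ : ℤ} (hq : 0 ≤ q)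
    (hpq : Even ((p - 1) * (q - 1))) (hρ : -p ≤ 2 * ρ) (hv : 2 * v < p) :
    v * q < (p - 1) * (q - 1) / 2 + ρ + p := by
  have hδ : 2 * ((p - 1) * (q - 1) / 2) = (p - 1) * (q - 1) := Int.two_mul_ediv_two_of_even hpq
  have hvq : 2 * v * q ≤ (p - 1) * q := mul_le_mul_of_nonneg_right (by omega) hq
  linarith

theorem stmt17_general (p q rb L ρ : ℤ) (hp : 0 < p) (hq : 0 ≤ q)
    (hqrb : q * rb = 1 + L * p) (hL : Odd L) (hprb : Odd (p + rb)) (hρ : -p ≤ 2 * ρ)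
    (hv : 2 * (((p + rb - 1) / 2 + ρ * rb) % p) < p) :
    (p - 1) * (q - 1) / 2 + ρ ∈ Spq p q ∧
    ∃ t : ℤ, 0 ≤ t ∧
      (p - 1) * (q - 1) / 2 + ρ = t * p + (((p + rb - 1) / 2 + ρ * rb) % p) * q := by
  have hpq : Even ((p - 1) * (q - 1)) := even_sub_one_mul_sub_one_of_mul_eq_one_add_mul hqrb
  obtain ⟨t, ht0, ht⟩ := exists_nonneg_eq_mul_add_of_modEq_of_lt hp
    (sub_one_mul_sub_one_ediv_two_add_modEq hqrb hL hprb ρ)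
    (mul_lt_sub_one_mul_sub_one_ediv_two_add hq hpq hρ hv)
  exact ⟨⟨t, _, ht0, Int.emod_nonneg _ hp.ne', ht⟩, t, ht0, ht⟩

theorem stmt17 (p q k r rb l ρ : ℤ) (hp : 1 < p) (hq : 1 < q)
    (hpq : Int.gcd p q = 1) (hpeven : Even p)
    (hqkr : q = k * p + r) (hr0 : 0 < r) (hrp : r < p)
    (hrb0 : 0 < rb) (hrbp : rb < p) (hrrb : r * rb = 1 + l * p)
    (hkl : Odd (k + l))
    (hρ0 : 0 ≤ ρ) (hρ1 : ρ ≤ p / 2)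
    (hrρ : ((p + rb - 1) / 2 + ρ * rb) % p ≤ p / 2 - 1) :
    (p - 1) * (q - 1) / 2 + ρ ∈ Spq p q ∧
    ∃ t : ℤ, 0 ≤ t ∧
      (p - 1) * (q - 1) / 2 + ρ = t * p + (((p + rb - 1) / 2 + ρ * rb) % p) * q := by
  have hrb : Odd rb := odd_right_of_mul_eq_one_add_mul hpeven hrrb
  exact stmt17_general p q rb (l + k * rb) ρ (by omega) (by omega)
    (by linear_combination rb * hqkr + hrrb) (odd_add_mul_of_odd hkl hrb) (hpeven.add_odd hrb)
    (by omega) (by omega)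
end
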